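/- arXiv:2109.08064 — 2 statements merged into one kernel-verified Lean document; each statement's English description precedes it below -/
import Mathlib

section
/- Every Gödel doctrine P : Cᵒᵖ → Pos validates the Skolemisation principle: for all objects A₁, A₂, B of C and every α ∈ P(A₁ × A₂ × B), the equality ∀_π (∃_{π'} α) = ∃_ρ (∀_{ρ'} P_e α) holds in P(A₁), i.e. a₁:A₁ | ∀a₂.∃b.α(a₁,a₂,b) ⊣⊢ ∃f.∀a₂.α(a₁,a₂,f a₂). Here π : A₁ × A₂ → A₁ and π' : A₁ × A₂ × B → A₁ × A₂ are product projections; B^{A₂} is the exponential object with evaluation ev : B^{A₂} × A₂ → B; ρ : A₁ × B^{A₂} → A₁ and ρ' : A₁ × B^{A₂} × A₂ → A₁ × B^{A₂} are product projections; and e : A₁ × B^{A₂} × A₂ → A₁ × A₂ × B is the arrow (a₁, f, a₂) ↦ (a₁, a₂, ev(f, a₂)). -/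
open CategoryTheory MonoidalCategory CartesianMonoidalCategory
open scoped CartesianClosed

universe v u

/-- A doctrine: a (contravariant) functor from a category `C` with finite products
to the category of posets and monotone maps, presented concretely. -/
structure Doctrine (C : Type u) [Category.{v} C] [CartesianMonoidalCategory C] where
  obj : C → Type*
  ord : ∀ A : C, PartialOrder (obj A)
  map : ∀ {A B : C}, (A ⟶ B) → obj B → obj A
  map_mono : ∀ {A B : C} (f : A ⟶ B), Monotone (map f)
  map_id : ∀ {A : C} (α : obj A), map (𝟙 A) α = α
  map_comp : ∀ {A B D : C} (f : A ⟶ B) (g : B ⟶ D) (α : obj D),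
    map (f ≫ g) α = map f (map g α)

attribute [instance] Doctrine.ord

/-- A doctrine that is both existential and universal: reindexing along the two
product projections has both adjoints, satisfying the Beck–Chevalley condition. -/
structure EUDoctrine (C : Type u) [Category.{v} C] [CartesianMonoidalCategory C]
    extends Doctrine C where
  ex1 : ∀ {A B : C}, obj (A ⊗ B) → obj A
  ex1_gc : ∀ (A B : C), GaloisConnection (ex1 (A := A) (B := B)) (map (fst A B))
  ex2 : ∀ {A B : C}, obj (A ⊗ B) → obj B
  ex2_gc : ∀ (A B : C), GaloisConnection (ex2 (A := A) (B := B)) (map (snd A B))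
  ex1_bc : ∀ {A A' B : C} (f : A' ⟶ A) (β : obj (A ⊗ B)),
    ex1 (map (f ⊗ₘ 𝟙 B) β) = map f (ex1 β)
  ex2_bc : ∀ {A B B' : C} (f : B' ⟶ B) (β : obj (A ⊗ B)),
    ex2 (map (𝟙 A ⊗ₘ f) β) = map f (ex2 β)
  all1 : ∀ {A B : C}, obj (A ⊗ B) → obj A
  all1_gc : ∀ (A B : C), GaloisConnection (map (fst A B)) (all1 (A := A) (B := B))
  all2 : ∀ {A B : C}, obj (A ⊗ B) → obj B
  all2_gc : ∀ (A B : C), GaloisConnection (map (snd A B)) (all2 (A := A) (B := B))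
  all1_bc : ∀ {A A' B : C} (f : A' ⟶ A) (β : obj (A ⊗ B)),
    all1 (map (f ⊗ₘ 𝟙 B) β) = map f (all1 β)
  all2_bc : ∀ {A B B' : C} (f : B' ⟶ B) (β : obj (A ⊗ B)),
    all2 (map (𝟙 A ⊗ₘ f) β) = map f (all2 β)

namespace EUDoctrine

variable {C : Type u} [Category.{v} C] [CartesianMonoidalCategory C] (D : EUDoctrine C)

/-- `α` is an existential splitting: whenever `α ≤ ∃_{π_A} β` there is `g : A ⟶ B`
with `α ≤ P_⟨1_A, g⟩ β`. -/
def ExSplitting {A : C} (α : D.obj A) : Prop :=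
  ∀ (B : C) (β : D.obj (A ⊗ B)), α ≤ D.ex1 β →
    ∃ g : A ⟶ B, α ≤ D.map (lift (𝟙 A) g) β

/-- `α` is existential-free: every reindexing of `α` is an existential splitting. -/
def ExFree {I : C} (α : D.obj I) : Prop :=
  ∀ (A : C) (f : A ⟶ I), D.ExSplitting (D.map f α)

/-- `α` is a universal splitting in the subdoctrine of existential-free predicates. -/
def UnivSplittingSub {A : C} (α : D.obj A) : Prop :=
  ∀ (B : C) (β : D.obj (A ⊗ B)), D.ExFree β → D.all1 β ≤ α →
    ∃ g : A ⟶ B, D.map (lift (𝟙 A) g) β ≤ α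

/-- `α` is universal-free in the subdoctrine of existential-free predicates. -/
def UnivFreeSub {I : C} (α : D.obj I) : Prop :=
  ∀ (A : C) (f : A ⟶ I), D.UnivSplittingSub (D.map f α)

/-- `α` is quantifier-free: existential-free and universal-free in the subdoctrine of
existential-free predicates. -/
def QFree {I : C} (α : D.obj I) : Prop := D.ExFree α ∧ D.UnivFreeSub α

end EUDoctrine

/-- A Gödel doctrine. -/
structure GoedelDoctrine (C : Type u) [Category.{v} C] [CartesianMonoidalCategory C]
    [MonoidalClosed C] extends EUDoctrine C where
  enough_exFree : ∀ (I : C) (α : obj I), ∃ (A : C) (β : obj (I ⊗ A)),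
    toEUDoctrine.ExFree β ∧ α = ex1 β
  exFree_all1 : ∀ {A B : C} (α : obj (A ⊗ B)),
    toEUDoctrine.ExFree α → toEUDoctrine.ExFree (all1 α)
  exFree_all2 : ∀ {A B : C} (α : obj (A ⊗ B)),
    toEUDoctrine.ExFree α → toEUDoctrine.ExFree (all2 α)
  enough_univFree : ∀ (I : C) (α : obj I), toEUDoctrine.ExFree α →
    ∃ (A : C) (β : obj (I ⊗ A)), toEUDoctrine.ExFree β ∧ toEUDoctrine.UnivFreeSub β ∧
      α = all1 β

/-!
An existential-free predicate below `∃b.α` is below an instance of `α` at an explicit term.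
Write `∀a₂.∃b.α` as `∃x.β` with `β` existential-free. Then `β(a₁, x) ≤ ∃b.α(a₁, a₂, b)` in the
context `(a₁, x, a₂)`, so some arrow `g` gives `β(a₁, x) ≤ α(a₁, a₂, g(a₁, x, a₂))`. The transpose
of `g` in the variable `a₂` is the required Skolem function. The converse inequality is formal.
-/

section SkolemArrow

variable {C : Type u} [Category.{v} C] [CartesianMonoidalCategory C]

/-- The arrow `A₁ × B^{A₂} × A₂ → A₁ × A₂ × B`, `(a₁, f, a₂) ↦ (a₁, a₂, ev(f, a₂))`, along which
Skolemisation reindexes. The arguments of `ev` are swapped because Mathlib's evaluation is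
`A₂ ⊗ (A₂ ⟹ B) ⟶ B`. -/
def skolemArrow (A₁ A₂ B : C) [Closed A₂] :
    (A₁ ⊗ (A₂ ⟹ B)) ⊗ A₂ ⟶ (A₁ ⊗ A₂) ⊗ B :=
  lift (lift (fst (A₁ ⊗ (A₂ ⟹ B)) A₂ ≫ fst A₁ (A₂ ⟹ B)) (snd (A₁ ⊗ (A₂ ⟹ B)) A₂))
    (lift (snd (A₁ ⊗ (A₂ ⟹ B)) A₂) (fst (A₁ ⊗ (A₂ ⟹ B)) A₂ ≫ snd A₁ (A₂ ⟹ B)) ≫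
      (ihom.ev A₂).app B)

lemma skolemArrow_fst (A₁ A₂ B : C) [Closed A₂] :
    skolemArrow A₁ A₂ B ≫ fst (A₁ ⊗ A₂) B = fst A₁ (A₂ ⟹ B) ▷ A₂ := by
  ext <;> simp [skolemArrow]

/-- The Skolem function of `g : X × A → B`: its transpose `X → B^A` in the second variable. -/
def skolemFunction {X A B : C} [Closed A] (g : X ⊗ A ⟶ B) : X ⟶ (A ⟹ B) :=
  MonoidalClosed.curry (lift (snd A X) (fst A X) ≫ g)

lemma lift_snd_skolemFunction_ev {X A B : C} [Closed A] (g : X ⊗ A ⟶ B) :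
    lift (snd X A) (fst X A ≫ skolemFunction g) ≫ (ihom.ev A).app B = g := by
  have swap_swap : lift (snd X A) (fst X A) ≫ lift (snd A X) (fst A X) = 𝟙 _ := by
    ext <;> simp
  calc
    lift (snd X A) (fst X A ≫ skolemFunction g) ≫ (ihom.ev A).app B =
        lift (snd X A) (fst X A) ≫ MonoidalClosed.uncurry (skolemFunction g) := by
      rw [MonoidalClosed.uncurry_eq, lift_whiskerLeft_assoc]
    _ = g := by
      rw [skolemFunction, MonoidalClosed.uncurry_curry, reassoc_of% swap_swap]

lemma whiskerRight_lift_skolemFunction_skolemArrow {X A₁ A₂ B : C} [Closed A₂]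
    (f : X ⟶ A₁) (g : X ⊗ A₂ ⟶ B) :
    lift f (skolemFunction g) ▷ A₂ ≫ skolemArrow A₁ A₂ B = lift (f ▷ A₂) g := by
  ext
  · simp [skolemArrow]
  · simp [skolemArrow]
  · simpa [skolemArrow, comp_lift_assoc] using lift_snd_skolemFunction_ev g

end SkolemArrow

namespace EUDoctrine

variable {C : Type u} [Category.{v} C] [CartesianMonoidalCategory C] (D : EUDoctrine C)

/-- The doctrine has enough existential-free predicates over the object `I`: the paper's condition
at a single object. -/
def HasEnoughExFree (I : C) : Prop :=
  ∀ α : D.obj I, ∃ (A : C) (β : D.obj (I ⊗ A)), D.ExFree β ∧ α = D.ex1 β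

lemma map_le_map_comp_fst_ex1 {X A B : C} (h : X ⟶ A ⊗ B) (β : D.obj (A ⊗ B)) :
    D.map h β ≤ D.map (h ≫ fst A B) (D.ex1 β) := by
  rw [D.map_comp]
  exact D.map_mono h ((D.ex1_gc A B).le_u_l β)

lemma le_map_all1_iff {X A B : C} (f : X ⟶ A) (γ : D.obj X) (β : D.obj (A ⊗ B)) :
    γ ≤ D.map f (D.all1 β) ↔ D.map (fst X B) γ ≤ D.map (f ▷ B) β := by
  rw [← D.all1_bc, tensorHom_id]
  exact (D.all1_gc X B _ _).symm

lemma ex1_all1_map_le_all1_ex1 {A₁ A₂ B F : C} {h : (A₁ ⊗ F) ⊗ A₂ ⟶ (A₁ ⊗ A₂) ⊗ B}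
    (h_fst : h ≫ fst (A₁ ⊗ A₂) B = fst A₁ F ▷ A₂) (α : D.obj ((A₁ ⊗ A₂) ⊗ B)) :
    D.ex1 (D.all1 (D.map h α)) ≤ D.all1 (D.ex1 α) := by
  refine (D.ex1_gc A₁ F).l_le ((D.le_map_all1_iff _ _ _).2 ?_)
  calc
    D.map (fst (A₁ ⊗ F) A₂) (D.all1 (D.map h α)) ≤ D.map h α := (D.all1_gc _ _).l_u_le _
    _ ≤ D.map (h ≫ fst (A₁ ⊗ A₂) B) (D.ex1 α) := D.map_le_map_comp_fst_ex1 h α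
    _ = D.map (fst A₁ F ▷ A₂) (D.ex1 α) := by rw [h_fst]

variable {D}

lemma ExSplitting.exists_le_map_lift {X A B : C} {γ : D.obj X} (hγ : D.ExSplitting γ)
    {f : X ⟶ A} {α : D.obj (A ⊗ B)} (h : γ ≤ D.map f (D.ex1 α)) :
    ∃ g : X ⟶ B, γ ≤ D.map (lift f g) α := by
  rw [← D.ex1_bc] at h
  obtain ⟨g, hg⟩ := hγ B _ h
  refine ⟨g, hg.trans_eq ?_⟩
  rw [← D.map_comp, lift_map, Category.id_comp, Category.comp_id]

lemma ExFree.exists_le_map_lift_all1_skolemArrow {X A₁ A₂ B : C} [Closed A₂] {β : D.obj X}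
    (hβ : D.ExFree β) {f : X ⟶ A₁} {α : D.obj ((A₁ ⊗ A₂) ⊗ B)}
    (h : β ≤ D.map f (D.all1 (D.ex1 α))) :
    ∃ s : X ⟶ (A₂ ⟹ B),
      β ≤ D.map (lift f s) (D.all1 (D.map (skolemArrow A₁ A₂ B) α)) := by
  rw [le_map_all1_iff] at h
  obtain ⟨g, hg⟩ := (hβ _ (fst X A₂)).exists_le_map_lift h
  refine ⟨skolemFunction g, ?_⟩
  rwa [le_map_all1_iff, ← D.map_comp, whiskerRight_lift_skolemFunction_skolemArrow]

end EUDoctrine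

theorem GoedelDoctrine.skolemisation_general {C : Type u} [Category.{v} C]
    [CartesianMonoidalCategory C] (D : EUDoctrine C) {A₁ : C} (hD : D.HasEnoughExFree A₁)
    (A₂ B : C) [Closed A₂] (α : D.obj ((A₁ ⊗ A₂) ⊗ B)) :
    D.all1 (D.ex1 α) = D.ex1 (D.all1 (D.map (skolemArrow A₁ A₂ B) α)) := by
  apply le_antisymm
  · obtain ⟨X, β, hβ, hαβ⟩ := hD (D.all1 (D.ex1 α))
    have hβ_le : β ≤ D.map (fst A₁ X) (D.all1 (D.ex1 α)) := hαβ ▸ (D.ex1_gc A₁ X).le_u_l β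
    obtain ⟨s, hs⟩ := hβ.exists_le_map_lift_all1_skolemArrow hβ_le
    rw [hαβ]
    refine (D.ex1_gc A₁ X).l_le (hs.trans ?_)
    simpa only [lift_fst] using D.map_le_map_comp_fst_ex1 (lift (fst A₁ X) s) _
  · exact D.ex1_all1_map_le_all1_ex1 (skolemArrow_fst A₁ A₂ B) α

/-- **Skolemisation in a Gödel doctrine** (Theorem 3): for every `α ∈ P(A₁ × A₂ × B)`,
`a₁:A₁ | ∀a₂.∃b.α(a₁,a₂,b) ⊣⊢ ∃f.∀a₂.α(a₁,a₂,f a₂)`, where `f` ranges over the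
exponential `B^{A₂}` and the right-hand side reindexes `α` along
`e : (a₁, f, a₂) ↦ (a₁, a₂, ev(f, a₂))`. -/
theorem GoedelDoctrine.skolemisation {C : Type u} [Category.{v} C]
    [CartesianMonoidalCategory C] [MonoidalClosed C] (D : GoedelDoctrine C)
    (A₁ A₂ B : C) (α : D.obj ((A₁ ⊗ A₂) ⊗ B)) :
    D.all1 (D.ex1 α) =
      D.ex1 (D.all1 (D.map
        (lift (lift (fst (A₁ ⊗ (A₂ ⟹ B)) A₂ ≫ fst A₁ (A₂ ⟹ B))
            (snd (A₁ ⊗ (A₂ ⟹ B)) A₂))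
          (lift (snd (A₁ ⊗ (A₂ ⟹ B)) A₂)
            (fst (A₁ ⊗ (A₂ ⟹ B)) A₂ ≫ snd A₁ (A₂ ⟹ B)) ≫ (ihom.ev A₂).app B)) α)) :=
  GoedelDoctrine.skolemisation_general D.toEUDoctrine (D.enough_exFree A₁) A₂ B α
end

section
/- Every Gödel hyperdoctrine P : Cᵒᵖ → Hey satisfies the Modified Markov's Rule: for all objects A, B of C, every quantifier-free predicate β_D ∈ P(A) and every existential-free predicate α ∈ P(A × B), if ⊤ ≤ (∀_{π_A} α) → β_D holds in P(A) (i.e. a:A | ⊤ ⊢ (∀b.α(a,b)) → β_D(a)), then ⊤ ≤ ∃_{π_A} (α → P_{π_A} β_D) holds in P(A) (i.e. a:A | ⊤ ⊢ ∃b.(α(a,b) → β_D(a))), where π_A : A × B → A is the product projection. -/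
open CategoryTheory MonoidalCategory CartesianMonoidalCategory

universe v u

/-- A hyperdoctrine: a (contravariant) functor from a category `C` with finite products
to the category of Heyting algebras and Heyting algebra homomorphisms,
presented concretely. -/
structure Hyperdoctrine (C : Type u) [Category.{v} C] [CartesianMonoidalCategory C] where
  obj : C → Type*
  hey : ∀ A : C, HeytingAlgebra (obj A)
  map : ∀ {A B : C}, (A ⟶ B) → obj B → obj A
  map_mono : ∀ {A B : C} (f : A ⟶ B), Monotone (map f)
  map_id : ∀ {A : C} (α : obj A), map (𝟙 A) α = α
  map_comp : ∀ {A B D : C} (f : A ⟶ B) (g : B ⟶ D) (α : obj D),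
    map (f ≫ g) α = map f (map g α)
  map_inf : ∀ {A B : C} (f : A ⟶ B) (x y : obj B), map f (x ⊓ y) = map f x ⊓ map f y
  map_sup : ∀ {A B : C} (f : A ⟶ B) (x y : obj B), map f (x ⊔ y) = map f x ⊔ map f y
  map_top : ∀ {A B : C} (f : A ⟶ B), map f ⊤ = ⊤
  map_bot : ∀ {A B : C} (f : A ⟶ B), map f ⊥ = ⊥
  map_himp : ∀ {A B : C} (f : A ⟶ B) (x y : obj B), map f (x ⇨ y) = map f x ⇨ map f y

attribute [instance] Hyperdoctrine.hey

/-- A hyperdoctrine that is both existential and universal: reindexing along the two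
product projections has both adjoints, satisfying the Beck–Chevalley condition. -/
structure EUHyperdoctrine (C : Type u) [Category.{v} C] [CartesianMonoidalCategory C]
    extends Hyperdoctrine C where
  ex1 : ∀ {A B : C}, obj (A ⊗ B) → obj A
  ex1_gc : ∀ (A B : C), GaloisConnection (ex1 (A := A) (B := B)) (map (fst A B))
  ex2 : ∀ {A B : C}, obj (A ⊗ B) → obj B
  ex2_gc : ∀ (A B : C), GaloisConnection (ex2 (A := A) (B := B)) (map (snd A B))
  ex1_bc : ∀ {A A' B : C} (f : A' ⟶ A) (β : obj (A ⊗ B)),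
    ex1 (map (f ⊗ₘ 𝟙 B) β) = map f (ex1 β)
  ex2_bc : ∀ {A B B' : C} (f : B' ⟶ B) (β : obj (A ⊗ B)),
    ex2 (map (𝟙 A ⊗ₘ f) β) = map f (ex2 β)
  all1 : ∀ {A B : C}, obj (A ⊗ B) → obj A
  all1_gc : ∀ (A B : C), GaloisConnection (map (fst A B)) (all1 (A := A) (B := B))
  all2 : ∀ {A B : C}, obj (A ⊗ B) → obj B
  all2_gc : ∀ (A B : C), GaloisConnection (map (snd A B)) (all2 (A := A) (B := B))
  all1_bc : ∀ {A A' B : C} (f : A' ⟶ A) (β : obj (A ⊗ B)),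
    all1 (map (f ⊗ₘ 𝟙 B) β) = map f (all1 β)
  all2_bc : ∀ {A B B' : C} (f : B' ⟶ B) (β : obj (A ⊗ B)),
    all2 (map (𝟙 A ⊗ₘ f) β) = map f (all2 β)

namespace EUHyperdoctrine

variable {C : Type u} [Category.{v} C] [CartesianMonoidalCategory C] (D : EUHyperdoctrine C)

/-- `α` is an existential splitting: whenever `α ≤ ∃_{π_A} β` there is `g : A ⟶ B`
with `α ≤ P_⟨1_A, g⟩ β`. -/
def ExSplitting {A : C} (α : D.obj A) : Prop :=
  ∀ (B : C) (β : D.obj (A ⊗ B)), α ≤ D.ex1 β →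
    ∃ g : A ⟶ B, α ≤ D.map (lift (𝟙 A) g) β

/-- `α` is existential-free: every reindexing of `α` is an existential splitting. -/
def ExFree {I : C} (α : D.obj I) : Prop :=
  ∀ (A : C) (f : A ⟶ I), D.ExSplitting (D.map f α)

/-- `α` is a universal splitting in the subdoctrine of existential-free predicates. -/
def UnivSplittingSub {A : C} (α : D.obj A) : Prop :=
  ∀ (B : C) (β : D.obj (A ⊗ B)), D.ExFree β → D.all1 β ≤ α →
    ∃ g : A ⟶ B, D.map (lift (𝟙 A) g) β ≤ α

/-- `α` is universal-free in the subdoctrine of existential-free predicates. -/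
def UnivFreeSub {I : C} (α : D.obj I) : Prop :=
  ∀ (A : C) (f : A ⟶ I), D.UnivSplittingSub (D.map f α)

/-- `α` is quantifier-free: existential-free and universal-free in the subdoctrine of
existential-free predicates. -/
def QFree {I : C} (α : D.obj I) : Prop := D.ExFree α ∧ D.UnivFreeSub α

end EUHyperdoctrine

/-- A Gödel hyperdoctrine: a Gödel doctrine whose fibres are Heyting algebras and whose
reindexing maps are Heyting algebra homomorphisms. -/
structure GoedelHyperdoctrine (C : Type u) [Category.{v} C] [CartesianMonoidalCategory C]
    [MonoidalClosed C] extends EUHyperdoctrine C where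
  enough_exFree : ∀ (I : C) (α : obj I), ∃ (A : C) (β : obj (I ⊗ A)),
    toEUHyperdoctrine.ExFree β ∧ α = ex1 β
  exFree_all1 : ∀ {A B : C} (α : obj (A ⊗ B)),
    toEUHyperdoctrine.ExFree α → toEUHyperdoctrine.ExFree (all1 α)
  exFree_all2 : ∀ {A B : C} (α : obj (A ⊗ B)),
    toEUHyperdoctrine.ExFree α → toEUHyperdoctrine.ExFree (all2 α)
  enough_univFree : ∀ (I : C) (α : obj I), toEUHyperdoctrine.ExFree α →
    ∃ (A : C) (β : obj (I ⊗ A)), toEUHyperdoctrine.ExFree β ∧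
      toEUHyperdoctrine.UnivFreeSub β ∧ α = all1 β

/-!
The hypothesis says `(∀b. α(a, b)) ≤ β(a)`. As `α` is existential-free and `β` is a universal
splitting among such predicates, a single instance of `α` already lies below `β`: there is
`g : A ⟶ B` with `α(a, g(a)) ≤ β(a)`. Hence `g` itself witnesses `∃b. (α(a, b) → β(a))`.
-/

section

variable {C : Type u} [Category.{v} C] [CartesianMonoidalCategory C]

theorem Hyperdoctrine.map_lift_map_fst (D : Hyperdoctrine C) {X A B : C} (f : X ⟶ A) (g : X ⟶ B)
    (γ : D.obj A) : D.map (lift f g) (D.map (fst A B) γ) = D.map f γ := by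
  rw [← D.map_comp, lift_fst]

namespace EUHyperdoctrine

theorem map_lift_le_map_ex1 (D : EUHyperdoctrine C) {X A B : C} (f : X ⟶ A) (g : X ⟶ B)
    (γ : D.obj (A ⊗ B)) : D.map (lift f g) γ ≤ D.map f (D.ex1 γ) :=
  calc
    D.map (lift f g) γ ≤ D.map (lift f g) (D.map (fst A B) (D.ex1 γ)) :=
      D.map_mono _ ((D.ex1_gc A B).le_u_l γ)
    _ = D.map f (D.ex1 γ) := D.map_lift_map_fst f g _

theorem map_lift_himp_map_le_map_ex1_himp (D : EUHyperdoctrine C) {X A B : C} (f : X ⟶ A)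
    (g : X ⟶ B) (α : D.obj (A ⊗ B)) (β : D.obj A) :
    D.map (lift f g) α ⇨ D.map f β ≤ D.map f (D.ex1 (α ⇨ D.map (fst A B) β)) :=
  calc
    D.map (lift f g) α ⇨ D.map f β = D.map (lift f g) (α ⇨ D.map (fst A B) β) := by
      rw [D.map_himp, D.map_lift_map_fst]
    _ ≤ D.map f (D.ex1 (α ⇨ D.map (fst A B) β)) := D.map_lift_le_map_ex1 f g _

theorem UnivFreeSub.univSplittingSub {D : EUHyperdoctrine C} {A : C} {β : D.obj A}
    (hβ : D.UnivFreeSub β) : D.UnivSplittingSub β := by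
  simpa only [D.map_id] using hβ A (𝟙 A)

end EUHyperdoctrine

theorem GoedelHyperdoctrine.modified_markov_rule_general (D : EUHyperdoctrine C) {A B : C}
    (β : D.obj A) (α : D.obj (A ⊗ B)) (hβ : D.UnivSplittingSub β) (hα : D.ExFree α)
    (h : ⊤ ≤ D.all1 α ⇨ β) : ⊤ ≤ D.ex1 (α ⇨ D.map (fst A B) β) := by
  have all_le : D.all1 α ≤ β := himp_eq_top_iff.mp (top_le_iff.mp h)
  obtain ⟨g, map_le⟩ := hβ B α hα all_le
  calc
    ⊤ = D.map (lift (𝟙 A) g) α ⇨ β := (himp_eq_top_iff.mpr map_le).symm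
    _ ≤ D.ex1 (α ⇨ D.map (fst A B) β) := by
      simpa only [D.map_id] using D.map_lift_himp_map_le_map_ex1_himp (𝟙 A) g α β

end

/-- **Modified Markov's Rule** (Theorem 6): in a Gödel hyperdoctrine, for every
quantifier-free `β_D ∈ P(A)` and every existential-free `α ∈ P(A × B)`, if
`a:A | ⊤ ⊢ (∀b.α(a,b)) → β_D(a)` then `a:A | ⊤ ⊢ ∃b.(α(a,b) → β_D(a))`. -/
theorem GoedelHyperdoctrine.modified_markov_rule {C : Type u} [Category.{v} C]
    [CartesianMonoidalCategory C] [MonoidalClosed C] (D : GoedelHyperdoctrine C)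
    {A B : C} (βD : D.obj A) (α : D.obj (A ⊗ B))
    (hβ : D.toEUHyperdoctrine.QFree βD)
    (hα : D.toEUHyperdoctrine.ExFree α)
    (h : ⊤ ≤ D.all1 α ⇨ βD) :
    ⊤ ≤ D.ex1 (α ⇨ D.map (fst A B) βD) :=
  modified_markov_rule_general D.toEUHyperdoctrine βD α hβ.2.univSplittingSub hα h
end
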